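/- arXiv:1705.09248 — 2 statements merged into one kernel-verified Lean document; each statement's English description precedes it below -/
import Mathlib

section
/- Let K be a field of characteristic zero and let B be a central simple algebra over K with dim_K B = m^2. If S is a commutative K-subalgebra of B that is a reduced ring (has no nonzero nilpotent elements), then dim_K S ≤ m. -/
/-!
Write `n = dim_K S`. Since `B` is central simple, the map `B ⊗ B → End_K B` sending `a ⊗ b` to
`x ↦ a * x * b` is injective (`eq_zero_of_sum_mul_mul_eq_zero`), hence so is its restriction to
`S ⊗ S`, on which it is a homomorphism of algebras because `S` is commutative
(`exists_injective_bimodule_action`). In characteristic zero a finite-dimensional reduced commutative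
algebra is unramified over `K`; unramifiedness passes to `S ⊗ S`, which is therefore again
reduced (`isReduced_tensorProduct_self`). A finite-dimensional reduced commutative algebra `T`
acting faithfully on `V` is a product of fields, each of which acts nontrivially on `V`; collecting
one nonzero vector from each factor gives a `v : V` with `t ↦ t v` injective, so
`dim T ≤ dim V` (`finrank_le_of_injective_toEnd`). For `T = S ⊗ S` and `V = B` this reads
`n ^ 2 ≤ m ^ 2`.
-/

open scoped TensorProduct

/-- In a central simple algebra, if the `b i` are linearly independent, then an identity
`∑ a i * x * b i = 0` valid for all `x` forces all `a i` to vanish. This is the injectivity of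
`B ⊗ Bᵐᵒᵖ → End_K B`. -/
theorem eq_zero_of_sum_mul_mul_eq_zero
    {K B ι : Type*} [Field K] [Ring B] [Algebra K B] [Algebra.IsCentral K B] [IsSimpleRing B]
    (b : ι → B) (hb : LinearIndependent K b) (s : Finset ι) :
    ∀ a : ι → B, (∀ x, ∑ i ∈ s, a i * x * b i = 0) → ∀ i ∈ s, a i = 0 := by
  classical
  induction s using Finset.induction_on with
  | empty => simp
  | insert j s hj ih =>
    intro a ha
    have key : a j = 0 := by
      by_contra hne
      -- The `j`-th coefficients of all such identities form a two-sided ideal, so some identity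
      -- has `j`-th coefficient `1`.
      let I : TwoSidedIdeal B := .mk'
        {c | ∃ a' : ι → B, a' j = c ∧ ∀ x, ∑ i ∈ insert j s, a' i * x * b i = 0}
        ⟨0, rfl, by simp⟩
        (by
          rintro _ _ ⟨a₁, rfl, h₁⟩ ⟨a₂, rfl, h₂⟩
          exact ⟨a₁ + a₂, rfl, fun x ↦ by
            simp only [Pi.add_apply, add_mul, Finset.sum_add_distrib, h₁, h₂, add_zero]⟩)
        (by
          rintro _ ⟨a₁, rfl, h₁⟩
          exact ⟨-a₁, rfl, fun x ↦ by
            simp only [Pi.neg_apply, neg_mul, Finset.sum_neg_distrib, h₁, neg_zero]⟩)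
        (by
          rintro y _ ⟨a₁, rfl, h₁⟩
          exact ⟨fun i ↦ y * a₁ i, rfl, fun x ↦ by
            simpa only [Finset.mul_sum, mul_assoc, mul_zero] using congr(y * $(h₁ x))⟩)
        (by
          rintro _ y ⟨a₁, rfl, h₁⟩
          exact ⟨fun i ↦ a₁ i * y, rfl, fun x ↦ by
            simpa only [mul_assoc] using h₁ (y * x)⟩)
      have hmem : a j ∈ I := (TwoSidedIdeal.mem_mk' ..).2 ⟨a, rfl, ha⟩
      have hone : (1 : B) ∈ I := IsSimpleRing.one_mem_of_ne_zero_mem I hne hmem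
      obtain ⟨a', h1, ha'⟩ := (TwoSidedIdeal.mem_mk' ..).1 hone
      -- Commuting that identity with `y` kills its `j`-th term, so all its coefficients are
      -- central.
      have hcen : ∀ i ∈ insert j s, ∃ k : K, algebraMap K B k = a' i := by
        intro i hi
        have : a' i ∈ Subalgebra.center K B := by
          rw [Subalgebra.mem_center_iff]
          intro y
          rcases Finset.mem_insert.1 hi with rfl | hi
          · simp [h1]
          have := ih (fun i ↦ y * a' i - a' i * y) (fun x ↦ by
            have e1 := congr(y * $(ha' x))
            have e2 := ha' (y * x)
            rw [Finset.sum_insert hj, h1] at e1 e2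
            simp only [mul_add, Finset.mul_sum, mul_zero, one_mul] at e1 e2
            simp only [sub_mul, Finset.sum_sub_distrib, mul_assoc] at e1 e2 ⊢
            rw [← sub_eq_zero.2 (e1.trans e2.symm)]
            abel) i hi
          exact sub_eq_zero.1 this
        rwa [Algebra.IsCentral.center_eq_bot, Algebra.mem_bot] at this
      choose! k hk using hcen
      have hsum : ∑ i ∈ insert j s, k i • b i = 0 := by
        rw [← ha' 1]
        exact Finset.sum_congr rfl fun i hi ↦ by rw [← hk i hi, mul_one, Algebra.smul_def]
      have hkj := linearIndependent_iff'.1 hb _ k hsum j (Finset.mem_insert_self _ _)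
      have := hk j (Finset.mem_insert_self _ _)
      rw [hkj, map_zero, h1] at this
      exact zero_ne_one this
    intro i hi
    rcases Finset.mem_insert.1 hi with rfl | hi
    · exact key
    · exact ih a (fun x ↦ by
        have := ha x
        rwa [Finset.sum_insert hj, key, zero_mul, zero_mul, zero_add] at this) i hi

/-- A commutative subalgebra `S` of a central simple algebra `B` makes `B` a faithful
`S ⊗ S`-module, through left and right multiplication. -/
theorem exists_injective_bimodule_action
    {K B S : Type*} [Field K] [Ring B] [Algebra K B] [Algebra.IsCentral K B] [IsSimpleRing B]
    [CommRing S] [Algebra K S] (φ : S →ₐ[K] B) (hφ : Function.Injective φ) :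
    ∃ f : S ⊗[K] S →ₐ[K] Module.End K B, Function.Injective f := by
  let L : S →ₐ[K] Module.End K B := (Algebra.lmul K B).comp φ
  let R : S →ₐ[K] Module.End K B :=
    AlgHom.ofLinearMap ((LinearMap.mul K B).flip.comp φ.toLinearMap)
      (by ext; simp) (fun x y ↦ by ext z; simp [mul_comm x y, mul_assoc])
  let f : S ⊗[K] S →ₐ[K] Module.End K B := Algebra.TensorProduct.lift L R
    (fun x y ↦ by
      change _ * _ = _ * _
      ext z; simp [L, R, mul_assoc])
  refine ⟨f, (injective_iff_map_eq_zero f).2 fun t ht ↦ ?_⟩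
  let bS := Module.Basis.ofVectorSpace K S
  obtain ⟨c, rfl⟩ := TensorProduct.eq_repr_basis_right bS t
  have hli : LinearIndependent K (φ ∘ bS) :=
    bS.linearIndependent.map' φ.toLinearMap (LinearMap.ker_eq_bot.2 hφ)
  have h := eq_zero_of_sum_mul_mul_eq_zero (φ ∘ bS) hli c.support (fun i ↦ φ (c i)) (fun x ↦ by
    have := LinearMap.congr_fun ht x
    simpa [Finsupp.sum, f, L, R, mul_assoc] using this)
  refine Finset.sum_eq_zero fun i hi ↦ ?_
  rw [(map_eq_zero_iff φ hφ).1 (h i hi)]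
  exact TensorProduct.zero_tmul _ _

theorem isReduced_tensorProduct_self
    {K S : Type*} [Field K] [CharZero K] [CommRing S] [Algebra K S] [FiniteDimensional K S]
    [IsReduced S] : IsReduced (S ⊗[K] S) := by
  have : IsArtinianRing S := IsArtinianRing.of_finite K S
  have hfac (I : MaximalSpectrum S) : Algebra.FormallyUnramified K (S ⧸ I.asIdeal) := by
    let := Ideal.Quotient.field I.asIdeal
    exact Algebra.FormallyUnramified.of_isSeparable K (S ⧸ I.asIdeal)
  have : Algebra.FormallyUnramified K S :=
    .of_equiv ((IsArtinianRing.equivPi S).restrictScalars K).symm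
  have : Algebra.FormallyUnramified K (S ⊗[K] S) := .comp K S (S ⊗[K] S)
  exact Algebra.FormallyUnramified.isReduced_of_field K (S ⊗[K] S)

/-- A reduced finite-dimensional commutative algebra acting faithfully on `V` has dimension at most
`dim V`: it has a separating vector. -/
theorem finrank_le_of_injective_toEnd
    {K T V : Type*} [Field K] [CommRing T] [Algebra K T] [FiniteDimensional K T] [IsReduced T]
    [AddCommGroup V] [Module K V] [FiniteDimensional K V]
    (f : T →ₐ[K] Module.End K V) (hf : Function.Injective f) :
    Module.finrank K T ≤ Module.finrank K V := by
  classical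
  have : IsArtinianRing T := IsArtinianRing.of_finite K T
  have := Fintype.ofFinite (MaximalSpectrum T)
  let E := IsArtinianRing.equivPi T
  -- The primitive idempotents of `T`.
  let e (I : MaximalSpectrum T) : T := E.symm (Pi.single I 1)
  have hEe (I) : E (e I) = Pi.single I 1 := E.apply_symm_apply _
  have he0 (I) : e I ≠ 0 := by
    intro h
    have := congr_fun (hEe I) I
    rw [h, map_zero, Pi.single_eq_same, Pi.zero_apply] at this
    exact (Ideal.Quotient.nontrivial_iff.2 I.isMaximal.ne_top).exists_pair_ne.elim
      fun x ⟨y, hxy⟩ ↦ hxy (by rw [← mul_one x, ← mul_one y, ← this, mul_zero, mul_zero])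
  have hex (I) : ∃ v, f (e I) v ≠ 0 := by
    by_contra! h
    exact he0 I (hf (by rw [map_zero]; ext v; exact h v))
  choose v hv using hex
  have horth (I J) : e I * e J = if I = J then e I else 0 := by
    apply E.injective
    rw [map_mul, hEe, hEe]
    split_ifs with h
    · subst h; rw [hEe, ← Pi.single_mul, mul_one]
    · ext M
      rw [map_zero, Pi.mul_apply, Pi.zero_apply]
      by_cases hM : M = I
      · subst hM
        rw [Pi.single_eq_of_ne h, mul_zero]
      · rw [Pi.single_eq_of_ne hM, zero_mul]
  let w := ∑ J, f (e J) (v J)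
  have hw (I) : f (e I) w = f (e I) (v I) := by
    simp only [w, map_sum, ← Module.End.mul_apply, ← map_mul, horth]
    rw [Finset.sum_eq_single I] <;> simp +contextual [eq_comm]
  let g : T →ₗ[K] V := (LinearMap.applyₗ w).comp f.toLinearMap
  refine LinearMap.finrank_le_finrank_of_injective (f := g)
    ((injective_iff_map_eq_zero g).2 fun t ht ↦ ?_)
  by_contra hne
  obtain ⟨I, hI⟩ : ∃ I, E t I ≠ 0 := by
    by_contra! h
    exact hne (E.injective (by rw [map_zero]; ext I; exact h I))
  -- `t` is invertible in the factor `T ⧸ I`.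
  obtain ⟨s, hs⟩ : ∃ s, s * t * e I = e I := by
    let := Ideal.Quotient.field I.asIdeal
    obtain ⟨s, hs⟩ := Ideal.Quotient.mk_surjective (E t I)⁻¹
    refine ⟨s, E.injective ?_⟩
    ext J
    rw [map_mul, hEe, map_mul]
    by_cases h : J = I
    · subst h
      have : E s J * E t J = 1 := by
        change Ideal.Quotient.mk _ s * _ = _
        rw [hs]; exact inv_mul_cancel₀ hI
      simp only [Pi.mul_apply, Pi.single_eq_same, mul_one, this]
    · simp [h]
  apply hv I
  have ht' : f t w = 0 := ht
  rw [← hw, ← hs, mul_right_comm, map_mul, Module.End.mul_apply, ht', map_zero]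

/-- Let `K` be a field of characteristic zero and `B` a central simple algebra
over `K` with `dim_K B = m ^ 2`.  If `S` is a commutative `K`-subalgebra of `B`
that is reduced (no nonzero nilpotents), then `dim_K S ≤ m`. -/
theorem finrank_le_of_commutative_reduced_subalgebra
    (K : Type*) [Field K] [CharZero K]
    (B : Type*) [Ring B] [Algebra K B]
    [Algebra.IsCentral K B] [IsSimpleRing B] [FiniteDimensional K B]
    (m : ℕ) (hB : Module.finrank K B = m ^ 2)
    (S : Subalgebra K B)
    (hcomm : ∀ x ∈ S, ∀ y ∈ S, x * y = y * x)
    (hred : ∀ x ∈ S, x ^ 2 = 0 → x = 0) :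
    Module.finrank K S ≤ m := by
  let : CommRing S :=
    { (inferInstance : Ring S) with
      mul_comm := fun x y ↦ Subtype.ext (hcomm x x.2 y y.2) }
  have : IsReduced S := (isReduced_iff_pow_one_lt 2 one_lt_two).2 fun x hx ↦
    Subtype.ext (hred x x.2 (congr_arg Subtype.val hx))
  obtain ⟨f, hf⟩ := exists_injective_bimodule_action S.val Subtype.val_injective
  have := isReduced_tensorProduct_self (K := K) (S := S)
  have h := finrank_le_of_injective_toEnd f hf
  rw [Module.finrank_tensorProduct, hB, ← sq] at h
  exact (Nat.pow_le_pow_iff_left two_ne_zero).1 h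
end

section
/- Let c ∈ ℂ[T] be a monic nonconstant polynomial, and suppose c = ∏_{i=1}^t g_i^{d_i} where each g_i ∈ ℂ[T] is monic and nonconstant and each d_i ≥ 1 is an integer. For each complex root z of c, let m(z) denote its multiplicity in c. Then ∑_{i=1}^t d_i^2 · deg(g_i) ≤ ∑_{z} m(z)^2, where the right-hand sum runs over the distinct complex roots z of c. Moreover, equality holds if and only if every g_i is squarefree (separable) and the polynomials g_1, …, g_t are pairwise coprime. -/
/-!
Write `m i z` for the multiplicity of `z` as a root of `g i`. Taking multiplicities in
`c = ∏ i, g i ^ d i` gives `m(z) = ∑ i, d i * m i z`, and since `ℂ` is algebraically closed,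
`deg (g i) = ∑ z, m i z` over the roots `z` of `c`. After exchanging sums, the claim is the sum
over `z` of the elementary inequality `∑ i, (d i)^2 * m i ≤ (∑ i, d i * m i)^2` for natural
numbers (`sum_sq_mul_le_sq_sum_mul`). Equality there means that every `m i` is at most `1` and at
most one of them is nonzero (`sum_sq_mul_eq_sq_sum_mul_iff`). Asking this at every `z` says that
every `g i` is squarefree (`squarefree_iff_rootMultiplicity_le_one`) and that no two of the `g i`
share a root, i.e. that they are pairwise coprime (`isCoprime_iff_rootMultiplicity_eq_zero_or`).
-/

open Polynomial

/-- One summand of `∑ i, d i ^ 2 * m i ≤ (∑ i, d i * m i) ^ 2`, the right-hand side being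
expanded as `∑ i, d i * m i * S` with `S = ∑ j, d j * m j`. It holds because `d i ≤ S` unless
`m i = 0`. -/
lemma sq_mul_le_mul_sum {ι : Type*} [Fintype ι] (d m : ι → ℕ) (i : ι) :
    d i ^ 2 * m i ≤ d i * m i * ∑ j, d j * m j := by
  have hi : d i * m i ≤ ∑ j, d j * m j :=
    Finset.single_le_sum (f := fun j => d j * m j) (fun _ _ => Nat.zero_le _) (Finset.mem_univ i)
  rcases Nat.eq_zero_or_pos (m i) with h | h
  · simp [h]
  · have : d i ≤ ∑ j, d j * m j := le_trans (Nat.le_mul_of_pos_right _ h) hi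
    calc d i ^ 2 * m i = d i * m i * d i := by ring
      _ ≤ _ := Nat.mul_le_mul_left _ this

lemma sum_sq_mul_le_sq_sum_mul {ι : Type*} [Fintype ι] (d m : ι → ℕ) :
    ∑ i, d i ^ 2 * m i ≤ (∑ i, d i * m i) ^ 2 := by
  rw [sq (∑ i, d i * m i), Finset.sum_mul]
  exact Finset.sum_le_sum fun i _ => sq_mul_le_mul_sum d m i

lemma sum_sq_mul_eq_sq_sum_mul_iff {ι : Type*} [Fintype ι] (d m : ι → ℕ) (hd : ∀ i, 1 ≤ d i) :
    ∑ i, d i ^ 2 * m i = (∑ i, d i * m i) ^ 2 ↔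
      (∀ i, m i ≤ 1) ∧ Pairwise fun i j => m i = 0 ∨ m j = 0 := by
  classical
  rw [sq (∑ i, d i * m i), Finset.sum_mul,
    Finset.sum_eq_sum_iff_of_le fun i _ => sq_mul_le_mul_sum d m i]
  constructor
  · intro h
    -- equality in the `i`-th term forces the whole sum to be `d i` as soon as `m i ≠ 0`
    have key : ∀ i, m i ≠ 0 → ∑ j, d j * m j = d i := by
      intro i hi
      have h1 := h i (Finset.mem_univ i)
      have hpos : 0 < d i * m i := Nat.mul_pos (hd i) (Nat.pos_of_ne_zero hi)
      apply Nat.eq_of_mul_eq_mul_left hpos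
      rw [← h1]; ring
    refine ⟨fun i => ?_, fun i j hij => ?_⟩
    · by_contra! hi
      have h1 := key i (by omega)
      have h2 : d i * m i ≤ ∑ j, d j * m j :=
        Finset.single_le_sum (f := fun j => d j * m j) (fun _ _ => Nat.zero_le _)
          (Finset.mem_univ i)
      nlinarith [hd i]
    · by_contra! hm
      have h1 := key i hm.1
      have h2 : ∑ k ∈ {i, j}, d k * m k ≤ ∑ k, d k * m k :=
        Finset.sum_le_sum_of_subset (Finset.subset_univ _)
      rw [Finset.sum_pair hij, h1] at h2
      have h3 : 0 < d j * m j := Nat.mul_pos (hd j) (Nat.pos_of_ne_zero hm.2)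
      have h4 : d i ≤ d i * m i := Nat.le_mul_of_pos_right _ (Nat.pos_of_ne_zero hm.1)
      omega
  · rintro ⟨h1, h2⟩ i -
    rcases Nat.eq_zero_or_pos (m i) with h | h
    · simp [h]
    · have hi : m i = 1 := le_antisymm (h1 i) h
      rw [Finset.sum_eq_single i]
      · rw [hi]; ring
      · intro j _ hj
        rcases h2 hj with h0 | h0
        · simp [h0]
        · omega
      · simp

lemma squarefree_iff_rootMultiplicity_le_one {p : ℂ[X]} (hp : p ≠ 0) :
    Squarefree p ↔ ∀ z, p.rootMultiplicity z ≤ 1 := by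
  rw [← PerfectField.separable_iff_squarefree, ← nodup_roots_iff_of_splits hp
    (IsAlgClosed.splits p), Multiset.nodup_iff_count_le_one]
  simp only [count_roots]

lemma isCoprime_iff_rootMultiplicity_eq_zero_or {p q : ℂ[X]} (hp : p ≠ 0) (hq : q ≠ 0) :
    IsCoprime p q ↔ ∀ z, p.rootMultiplicity z = 0 ∨ q.rootMultiplicity z = 0 := by
  rw [isCoprime_iff_aeval_ne_zero_of_isAlgClosed ℂ ℂ]
  refine forall_congr' fun z => ?_
  simp [rootMultiplicity_eq_zero_iff, hp, hq, IsRoot.def, aeval_def, eval₂_eq_eval_map]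

lemma rootMultiplicity_prod_pow {ι : Type*} [Fintype ι] (g : ι → ℂ[X]) (d : ι → ℕ)
    (hg : ∀ i, g i ≠ 0) (z : ℂ) :
    (∏ i, g i ^ d i).rootMultiplicity z = ∑ i, d i * (g i).rootMultiplicity z := by
  have h : ∏ i, g i ^ d i ≠ 0 := Finset.prod_ne_zero_iff.2 fun i _ => pow_ne_zero _ (hg i)
  rw [← count_roots, roots_prod _ _ h, Multiset.count_bind]
  simp [count_roots]

lemma natDegree_eq_sum_rootMultiplicity {p c : ℂ[X]} (hc : c ≠ 0) (hpc : p ∣ c) :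
    p.natDegree = ∑ z ∈ c.roots.toFinset, p.rootMultiplicity z := by
  have hsub : p.roots.toFinset ⊆ c.roots.toFinset :=
    Multiset.toFinset_subset.2 (Multiset.subset_of_le (roots.le_of_dvd hc hpc))
  rw [(IsAlgClosed.splits p).natDegree_eq_card_roots]
  simp only [← count_roots]
  exact (Multiset.sum_count_eq_card fun a ha => hsub (Multiset.mem_toFinset.2 ha)).symm

/-- Let `c ∈ ℂ[T]` be monic and nonconstant, and `c = ∏ i, g i ^ d i` with each
`g i` monic nonconstant and `d i ≥ 1`.  Then `∑ i, (d i)^2 * deg (g i)` is at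
most the sum of the squares of the multiplicities of the distinct complex roots
of `c`, with equality if and only if every `g i` is squarefree and the `g i`
are pairwise coprime. -/
theorem sum_sq_mul_deg_le_sum_sq_rootMultiplicity
    (t : ℕ) (g : Fin t → ℂ[X]) (d : Fin t → ℕ)
    (c : ℂ[X]) (hc : c.Monic) (hcdeg : 0 < c.natDegree)
    (hgmonic : ∀ i, (g i).Monic) (hgdeg : ∀ i, 0 < (g i).natDegree)
    (hd : ∀ i, 1 ≤ d i)
    (hfact : c = ∏ i, g i ^ d i) :
    (∑ i, (d i) ^ 2 * (g i).natDegree)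
        ≤ ∑ z ∈ c.roots.toFinset, (c.rootMultiplicity z) ^ 2 ∧
      ((∑ i, (d i) ^ 2 * (g i).natDegree)
          = ∑ z ∈ c.roots.toFinset, (c.rootMultiplicity z) ^ 2 ↔
        (∀ i, Squarefree (g i)) ∧
          (Pairwise fun i j => IsCoprime (g i) (g j))) := by
  have hg0 : ∀ i, g i ≠ 0 := fun i => (hgmonic i).ne_zero
  have hdvd : ∀ i, g i ∣ c := fun i => by
    rw [hfact]
    exact (dvd_pow_self _ (by have := hd i; omega)).trans
      (Finset.dvd_prod_of_mem (fun i => g i ^ d i) (Finset.mem_univ i))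
  have hmult : ∀ z, c.rootMultiplicity z = ∑ i, d i * (g i).rootMultiplicity z := fun z => by
    rw [hfact, rootMultiplicity_prod_pow g d hg0]
  have hlhs : ∑ i, (d i) ^ 2 * (g i).natDegree
      = ∑ z ∈ c.roots.toFinset, ∑ i, (d i) ^ 2 * (g i).rootMultiplicity z := by
    rw [Finset.sum_comm]
    refine Finset.sum_congr rfl fun i _ => ?_
    rw [natDegree_eq_sum_rootMultiplicity hc.ne_zero (hdvd i), Finset.mul_sum]
  have hle : ∀ z ∈ c.roots.toFinset, ∑ i, (d i) ^ 2 * (g i).rootMultiplicity z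
      ≤ (∑ i, d i * (g i).rootMultiplicity z) ^ 2 := fun z _ =>
    sum_sq_mul_le_sq_sum_mul d fun i => (g i).rootMultiplicity z
  simp only [hlhs, hmult]
  refine ⟨Finset.sum_le_sum hle, ?_⟩
  rw [Finset.sum_eq_sum_iff_of_le hle]
  -- away from the roots of `c` every `g i` has multiplicity zero
  have hzero : ∀ z, z ∉ c.roots.toFinset → ∀ i, (g i).rootMultiplicity z = 0 := by
    intro z hz i
    rw [← count_roots, Multiset.count_eq_zero]
    exact fun h => hz (Multiset.mem_toFinset.2
      (Multiset.subset_of_le (roots.le_of_dvd hc.ne_zero (hdvd i)) h))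
  have hiff : ∀ z, ∑ i, (d i) ^ 2 * (g i).rootMultiplicity z
      = (∑ i, d i * (g i).rootMultiplicity z) ^ 2 ↔ _ := fun z =>
    sum_sq_mul_eq_sq_sum_mul_iff d (fun i => (g i).rootMultiplicity z) hd
  constructor
  · intro h
    have hall : ∀ z, ∑ i, (d i) ^ 2 * (g i).rootMultiplicity z
        = (∑ i, d i * (g i).rootMultiplicity z) ^ 2 := by
      intro z
      by_cases hz : z ∈ c.roots.toFinset
      · exact h z hz
      · simp [hzero z hz]
    exact ⟨fun i => (squarefree_iff_rootMultiplicity_le_one (hg0 i)).2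
        fun z => ((hiff z).1 (hall z)).1 i,
      fun i j hij => (isCoprime_iff_rootMultiplicity_eq_zero_or (hg0 i) (hg0 j)).2
        fun z => ((hiff z).1 (hall z)).2 hij⟩
  · rintro ⟨hsq, hcop⟩ z -
    exact (hiff z).2 ⟨fun i => (squarefree_iff_rootMultiplicity_le_one (hg0 i)).1 (hsq i) z,
      fun i j hij =>
        (isCoprime_iff_rootMultiplicity_eq_zero_or (hg0 i) (hg0 j)).1 (hcop hij) z⟩
end
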